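/- Let X = [x₁,…,x_n] ∈ ℝ^{d×n}, d ≥ K ≥ 1, and fix a PD-selection p assigning to each C ∈ ℝ^{d×K} a fixed U-factor p(C) ∈ St(d,K) of a polar decomposition of C. There exists a constant τ₁ > 0 (depending only on X and p) such that for any 0 < τ < τ₁, if {(U^k, S^k)} is generated by S-PNGA (U^{k+1} = p(XS^k), S^{k+1} = sgn(τS^k + XᵀU^{k+1}) entrywise, S⁰ ∈ {−1,0,1}^{n×K}, ⟨XᵀU⁰, S⁰⟩ ≥ 0) and k′ is the first index with S^{k′} = S^{k′+1}, then: (a) U^{k′+1} is a FOC point, i.e. S^{k′+1}_{ij} = sgn(x_iᵀu_j^{k′+1}) whenever x_iᵀu_j^{k′+1} ≠ 0 and S^{k′+1}_{ij} ∈ [−1,1] otherwise, and U^{k′+1} is a U-factor of a polar decomposition of XS^{k′+1}; and (b) (U^{k′+1}, S^{k′+1}) is a partial maximizer of the bilinear problem: S^{k′+1} maximizes ⟨XᵀU^{k′+1}, S⟩ over S ∈ {−1,0,1}^{n×K} and U^{k′+1} maximizes ⟨XS^{k′+1}, U⟩ over U ∈ St(d,K). -/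

import Mathlib

/-!
The iterates `S k` only take values in `{-1, 0, 1}`, so only finitely many matrices `Xᵀ * p (X * S)`
can ever occur, and the nonzero entries of all of them are bounded away from zero by some `τ₁ > 0`
(`exists_pos_le_abs`, `finite_ternary`). If `τ < τ₁`, the proximal perturbation `τ • S`, whose
entries have modulus at most `τ`, cannot change the sign of a nonzero entry of `Xᵀ * U`
(`sign_add_of_abs_lt`). Hence a fixed point `S = sgn (τ • S + Xᵀ * U)` is a sign subgradient of
`Xᵀ * U`.

Partial maximality in `S` is the entrywise bound `v * t ≤ |v| = v * sgn v`. Partial maximality in `U`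
holds for every U-factor `C = U * H` (`IsUFactor.frobInner_le`): the trace of the positive
semidefinite matrix `(U - V) * H * (U - V)ᵀ` equals `2 * (⟨C, U⟩ - ⟨C, V⟩)`.
-/

open Matrix

noncomputable section

/-- The Stiefel manifold St(m,n): real m×n matrices with orthonormal columns. -/
def Stiefel (m n : ℕ) : Set (Matrix (Fin m) (Fin n) ℝ) := {U | Uᵀ * U = 1}

/-- Frobenius inner product ⟨A,B⟩ = trace(AᵀB). -/
def frobInner {m n : ℕ} (A B : Matrix (Fin m) (Fin n) ℝ) : ℝ := (Aᵀ * B).trace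

/-- Frobenius norm. -/
def frobNorm {m n : ℕ} (A : Matrix (Fin m) (Fin n) ℝ) : ℝ := Real.sqrt (frobInner A A)

/-- Entrywise L1 norm of a matrix. -/
def entryL1 {m n : ℕ} (A : Matrix (Fin m) (Fin n) ℝ) : ℝ := ∑ i, ∑ j, |A i j|

/-- Entrywise sign of a matrix. -/
def sgnMatrix {m n : ℕ} (A : Matrix (Fin m) (Fin n) ℝ) : Matrix (Fin m) (Fin n) ℝ :=
  Matrix.of fun i j => Real.sign (A i j)

/-- `U` is a U-factor of a polar decomposition of `C`: U ∈ St(m,n) and C = U*H with H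
symmetric positive semidefinite. -/
def IsUFactor {m n : ℕ} (U C : Matrix (Fin m) (Fin n) ℝ) : Prop :=
  U ∈ Stiefel m n ∧ ∃ H : Matrix (Fin n) (Fin n) ℝ, H.PosSemidef ∧ C = U * H

/-- `S` is an entrywise subgradient sign matrix for `V`: S_ij = sgn(V_ij) whenever
V_ij ≠ 0 and S_ij ∈ [-1,1] otherwise. -/
def IsSignSubgrad {m n : ℕ} (S V : Matrix (Fin m) (Fin n) ℝ) : Prop :=
  ∀ i j, (V i j ≠ 0 → S i j = Real.sign (V i j)) ∧ S i j ∈ Set.Icc (-1 : ℝ) 1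

/-- The nonzero elements of a finite set of reals are bounded away from zero: removing `0` leaves a
closed set, whose complement is a neighbourhood of `0`. -/
theorem exists_pos_le_abs {A : Set ℝ} (hA : A.Finite) :
    ∃ δ : ℝ, 0 < δ ∧ ∀ a ∈ A, a ≠ 0 → δ ≤ |a| := by
  have h : (A \ {0})ᶜ ∈ nhds (0 : ℝ) :=
    (hA.subset Set.sdiff_subset).isClosed.isOpen_compl.mem_nhds (by simp)
  obtain ⟨δ, hδ, hb⟩ := Metric.mem_nhds_iff.1 h
  refine ⟨δ, hδ, fun a ha h0 => ?_⟩
  by_contra! hlt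
  exact hb (show a ∈ Metric.ball 0 δ by simpa using hlt) ⟨ha, h0⟩

theorem finite_ternary (m n : ℕ) :
    {S : Matrix (Fin m) (Fin n) ℝ | ∀ i j, S i j ∈ ({-1, 0, 1} : Set ℝ)}.Finite :=
  Set.Finite.pi' fun _ => Set.Finite.pi' fun _ => Set.toFinite _

theorem sign_mem_ternary (x : ℝ) : Real.sign x ∈ ({-1, 0, 1} : Set ℝ) := by
  rcases Real.sign_apply_eq x with h | h | h <;> simp [h]

theorem sign_add_of_abs_lt {e v : ℝ} (h : |e| < |v|) : Real.sign (e + v) = Real.sign v := by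
  have he := abs_lt.1 h
  rcases lt_trichotomy v 0 with hv | rfl | hv
  · rw [abs_of_neg hv] at he
    rw [Real.sign_of_neg hv, Real.sign_of_neg (by linarith)]
  · simp at h
    linarith [abs_nonneg e]
  · rw [abs_of_pos hv] at he
    rw [Real.sign_of_pos hv, Real.sign_of_pos (by linarith)]

theorem frobInner_eq_sum {m n : ℕ} (A B : Matrix (Fin m) (Fin n) ℝ) :
    frobInner A B = ∑ j, ∑ i, A i j * B i j := by
  simp [frobInner, Matrix.trace, Matrix.mul_apply]

/-- A U-factor of `C` maximizes `⟨C, ·⟩` over the Stiefel manifold. -/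
theorem IsUFactor.frobInner_le {m n : ℕ} {U C V : Matrix (Fin m) (Fin n) ℝ}
    (h : IsUFactor U C) (hV : V ∈ Stiefel m n) : frobInner C V ≤ frobInner C U := by
  obtain ⟨hU, H, hH, rfl⟩ := h
  have hU' : Uᵀ * U = 1 := hU
  have hV' : Vᵀ * V = 1 := hV
  have hHt : Hᵀ = H := by simpa using hH.isHermitian.eq
  have h0 : 0 ≤ ((U - V) * H * (U - V)ᵀ).trace := by
    simpa using (hH.mul_mul_conjTranspose_same (U - V)).trace_nonneg
  have key : ∀ W : Matrix (Fin m) (Fin n) ℝ, Wᵀ * W = 1 → (W * H * Wᵀ).trace = H.trace := by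
    intro W hW
    rw [Matrix.trace_mul_comm, ← Matrix.mul_assoc, hW, Matrix.one_mul]
  have hUV : (U * H * Vᵀ).trace = frobInner (U * H) V := by
    rw [frobInner, ← Matrix.trace_transpose ((U * H)ᵀ * V), Matrix.transpose_mul,
      Matrix.transpose_transpose, Matrix.trace_mul_comm]
  have hVU : (V * H * Uᵀ).trace = frobInner (U * H) V := by
    rw [← hUV, ← Matrix.trace_transpose (V * H * Uᵀ)]
    simp [Matrix.transpose_mul, hHt, Matrix.mul_assoc]
  have hUU : frobInner (U * H) U = H.trace := by
    rw [frobInner, Matrix.transpose_mul, Matrix.mul_assoc, hU', Matrix.mul_one, hHt]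
  simp only [Matrix.transpose_sub, Matrix.sub_mul, Matrix.mul_sub, Matrix.trace_sub,
    key U hU', key V hV', hUV, hVU] at h0
  linarith

/-- item 3 of Theorem 3.13 — there is a threshold τ₁ > 0 (depending only
on the data X and the polar-decomposition selection p) such that for 0 < τ < τ₁, at the
first index k′ with S^{k′} = S^{k′+1}, S-PNGA stops at a FOC point U^{k′+1}, and
(U^{k′+1}, S^{k′+1}) is a partial maximizer of the bilinear L1-PCA problem. -/
theorem spnga_small_tau_stops_at_FOC {d n K : ℕ} (hK : 1 ≤ K) (hKd : K ≤ d)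
    (X : Matrix (Fin d) (Fin n) ℝ)
    (p : Matrix (Fin d) (Fin K) ℝ → Matrix (Fin d) (Fin K) ℝ)
    (hp : ∀ C, IsUFactor (p C) C) :
    ∃ τ₁ : ℝ, 0 < τ₁ ∧
      ∀ τ : ℝ, 0 < τ → τ < τ₁ →
      ∀ (U : ℕ → Matrix (Fin d) (Fin K) ℝ) (S : ℕ → Matrix (Fin n) (Fin K) ℝ),
        U 0 ∈ Stiefel d K →
        (∀ i j, S 0 i j ∈ ({-1, 0, 1} : Set ℝ)) →
        0 ≤ frobInner (Xᵀ * U 0) (S 0) →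
        (∀ k, U (k + 1) = p (X * S k)) →
        (∀ k, S (k + 1) = sgnMatrix (τ • S k + Xᵀ * U (k + 1))) →
        ∀ k' : ℕ, S k' = S (k' + 1) → (∀ j < k', S j ≠ S (j + 1)) →
          (IsSignSubgrad (S (k' + 1)) (Xᵀ * U (k' + 1)) ∧
            IsUFactor (U (k' + 1)) (X * S (k' + 1))) ∧
          ((∀ T : Matrix (Fin n) (Fin K) ℝ, (∀ i j, T i j ∈ ({-1, 0, 1} : Set ℝ)) →
              frobInner (Xᵀ * U (k' + 1)) T ≤ frobInner (Xᵀ * U (k' + 1)) (S (k' + 1))) ∧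
            (∀ V ∈ Stiefel d K,
              frobInner (X * S (k' + 1)) V ≤ frobInner (X * S (k' + 1)) (U (k' + 1)))) := by
  -- All values that any entry of `Xᵀ * U (k + 1)` can take along any run of the iteration.
  have hfin := ((finite_ternary n K).prod
    (Set.finite_univ (α := Fin n × Fin K))).image
      fun q => (Xᵀ * p (X * q.1)) q.2.1 q.2.2
  obtain ⟨τ₁, hpos, hbound⟩ := exists_pos_le_abs hfin
  refine ⟨τ₁, hpos, fun τ h0 hτ U S _ hS0 _ hU hS k hk _ => ?_⟩
  have htern : ∀ k i j, S k i j ∈ ({-1, 0, 1} : Set ℝ) := by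
    rintro (_ | k) i j
    · exact hS0 i j
    · rw [hS]
      exact sign_mem_ternary _
  have habs : ∀ {x : ℝ}, x ∈ ({-1, 0, 1} : Set ℝ) → |x| ≤ 1 := by
    rintro x (rfl | rfl | rfl) <;> simp
  have hsub : IsSignSubgrad (S (k + 1)) (Xᵀ * U (k + 1)) := by
    refine fun i j => ⟨fun hv => ?_, abs_le.1 (habs (htern _ i j))⟩
    have hle : τ₁ ≤ |(Xᵀ * U (k + 1)) i j| := by
      refine hbound _ ⟨(S k, (i, j)), ⟨htern k, trivial⟩, ?_⟩ hv
      simp only [hU]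
    have hlt : |τ * S k i j| < |(Xᵀ * U (k + 1)) i j| := by
      rw [abs_mul, abs_of_pos h0]
      nlinarith [habs (htern k i j)]
    rw [hS]
    exact sign_add_of_abs_lt hlt
  have hfac : IsUFactor (U (k + 1)) (X * S (k + 1)) := by
    rw [← hk, hU]
    exact hp _
  refine ⟨⟨hsub, hfac⟩, fun T hT => ?_, fun V hV => hfac.frobInner_le hV⟩
  rw [frobInner_eq_sum, frobInner_eq_sum]
  refine Finset.sum_le_sum fun j _ => Finset.sum_le_sum fun i _ => ?_
  have ht := abs_le.1 (habs (hT i j))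
  rcases lt_trichotomy ((Xᵀ * U (k + 1)) i j) 0 with hv | hv | hv
  · rw [(hsub i j).1 hv.ne, Real.sign_of_neg hv]
    nlinarith
  · simp [hv]
  · rw [(hsub i j).1 hv.ne', Real.sign_of_pos hv]
    nlinarith
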